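/- Let M be a finite-dimensional (α,β)-Yetter-Drinfeld module. Then End(M), with multiplication given by composition, left H-action (h·u)(m) = α⁻¹(h₁)·u(α⁻¹(S(h₂))·m), and right H-coaction determined by u₍₀₎(m) ⊗ u₍₁₎ = u(m₍₀₎)₍₀₎ ⊗ S⁻¹(m₍₁₎) u(m₍₀₎)₍₁₎, is an algebra in _H𝒴𝒟^H. -/

import Mathlib

open TensorProduct

noncomputable section

namespace GYD

variable (k H : Type) [Field k] [Ring H] [HopfAlgebra k H]

/-- `φ` is a Hopf algebra automorphism of `H` (a linear equivalence which is both an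
algebra morphism and a coalgebra morphism). -/
def IsHopfAut (φ : H ≃ₗ[k] H) : Prop :=
  (∀ x y : H, φ (x * y) = φ x * φ y) ∧ (φ 1 = 1) ∧
  (∀ h : H, Coalgebra.comul (R := k) (φ h)
      = TensorProduct.map φ.toLinearMap φ.toLinearMap (Coalgebra.comul (R := k) h)) ∧
  (∀ h : H, Coalgebra.counit (R := k) (φ h) = Coalgebra.counit (R := k) h)

/-- `Sinv` is a two-sided inverse of the antipode of `H`. -/
def IsAntipodeInv (Sinv : H → H) : Prop :=
  (∀ h : H, HopfAlgebra.antipode (R := k) (Sinv h) = h) ∧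
  (∀ h : H, Sinv (HopfAlgebra.antipode (R := k) h) = h)

/-- The data `(act, coact)` makes `M` an `(α, β)`-Yetter-Drinfeld module over `H`:
`M` is a left `H`-module, a right `H`-comodule, and the compatibility
`(h·m)₍₀₎ ⊗ (h·m)₍₁₎ = h₂·m₍₀₎ ⊗ β(h₃) m₍₁₎ α(Sinv(h₁))` holds (expressed via
arbitrary finite representations of `(Δ ⊗ id)(Δ h)` and of `coact m`). -/
def IsYD (Sinv α β : H → H) {M : Type} [AddCommGroup M] [Module k M]
    (act : H →ₗ[k] M →ₗ[k] M) (coact : M →ₗ[k] M ⊗[k] H) : Prop :=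
  (∀ m : M, act 1 m = m) ∧
  (∀ (g h : H) (m : M), act (g * h) m = act g (act h m)) ∧
  (∀ m : M, LinearMap.rTensor H coact (coact m)
      = (TensorProduct.assoc k M H H).symm
          (LinearMap.lTensor M (Coalgebra.comul (R := k)) (coact m))) ∧
  (∀ m : M,
    TensorProduct.rid k M (LinearMap.lTensor M (Coalgebra.counit (R := k)) (coact m)) = m) ∧
  (∀ (h : H) (m : M) (s t : Finset ℕ) (a b c : ℕ → H) (m₀ : ℕ → M) (m₁ : ℕ → H),
    LinearMap.rTensor H (Coalgebra.comul (R := k)) (Coalgebra.comul (R := k) h)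
        = ∑ i ∈ s, (a i ⊗ₜ[k] b i) ⊗ₜ[k] c i →
    coact m = ∑ j ∈ t, m₀ j ⊗ₜ[k] m₁ j →
    coact (act h m) = ∑ i ∈ s, ∑ j ∈ t,
      act (b i) (m₀ j) ⊗ₜ[k] (β (c i) * m₁ j * α (Sinv (a i))))

/-- Characterization of the action `h · (m ⊗ n) = θ₁(h₁)·m ⊗ θ₂(h₂)·n` on `M ⊗ N`. -/
def TensorActChar (θ₁ θ₂ : H → H) {M N : Type} [AddCommGroup M] [Module k M]
    [AddCommGroup N] [Module k N]
    (actM : H →ₗ[k] M →ₗ[k] M) (actN : H →ₗ[k] N →ₗ[k] N)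
    (act : H →ₗ[k] (M ⊗[k] N) →ₗ[k] (M ⊗[k] N)) : Prop :=
  ∀ (h : H) (m : M) (n : N) (s : Finset ℕ) (p q : ℕ → H),
    Coalgebra.comul (R := k) h = ∑ i ∈ s, p i ⊗ₜ[k] q i →
    act h (m ⊗ₜ[k] n) = ∑ i ∈ s, actM (θ₁ (p i)) m ⊗ₜ[k] actN (θ₂ (q i)) n

/-- Characterization of the "type two" action `h · (m ⊗ n) = h₂·m ⊗ h₁·n` on `M ⊗ N`. -/
def TensorActCharTwo {M N : Type} [AddCommGroup M] [Module k M]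
    [AddCommGroup N] [Module k N]
    (actM : H →ₗ[k] M →ₗ[k] M) (actN : H →ₗ[k] N →ₗ[k] N)
    (act : H →ₗ[k] (M ⊗[k] N) →ₗ[k] (M ⊗[k] N)) : Prop :=
  ∀ (h : H) (m : M) (n : N) (s : Finset ℕ) (p q : ℕ → H),
    Coalgebra.comul (R := k) h = ∑ i ∈ s, p i ⊗ₜ[k] q i →
    act h (m ⊗ₜ[k] n) = ∑ i ∈ s, actM (q i) m ⊗ₜ[k] actN (p i) n

/-- Characterization of the coaction `m ⊗ n ↦ (m₍₀₎ ⊗ n₍₀₎) ⊗ n₍₁₎ m₍₁₎` on `M ⊗ N`. -/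
def TensorCoactChar {M N : Type} [AddCommGroup M] [Module k M]
    [AddCommGroup N] [Module k N]
    (coactM : M →ₗ[k] M ⊗[k] H) (coactN : N →ₗ[k] N ⊗[k] H)
    (coact : M ⊗[k] N →ₗ[k] (M ⊗[k] N) ⊗[k] H) : Prop :=
  ∀ (m : M) (n : N) (s t : Finset ℕ) (m₀ : ℕ → M) (m₁ : ℕ → H) (n₀ : ℕ → N) (n₁ : ℕ → H),
    coactM m = ∑ i ∈ s, m₀ i ⊗ₜ[k] m₁ i →
    coactN n = ∑ j ∈ t, n₀ j ⊗ₜ[k] n₁ j →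
    coact (m ⊗ₜ[k] n) = ∑ i ∈ s, ∑ j ∈ t, (m₀ i ⊗ₜ[k] n₀ j) ⊗ₜ[k] (n₁ j * m₁ i)

/-- Characterization of the "type two" coaction `m ⊗ n ↦ (m₍₀₎ ⊗ n₍₀₎) ⊗ m₍₁₎ n₍₁₎`. -/
def TensorCoactCharTwo {M N : Type} [AddCommGroup M] [Module k M]
    [AddCommGroup N] [Module k N]
    (coactM : M →ₗ[k] M ⊗[k] H) (coactN : N →ₗ[k] N ⊗[k] H)
    (coact : M ⊗[k] N →ₗ[k] (M ⊗[k] N) ⊗[k] H) : Prop :=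
  ∀ (m : M) (n : N) (s t : Finset ℕ) (m₀ : ℕ → M) (m₁ : ℕ → H) (n₀ : ℕ → N) (n₁ : ℕ → H),
    coactM m = ∑ i ∈ s, m₀ i ⊗ₜ[k] m₁ i →
    coactN n = ∑ j ∈ t, n₀ j ⊗ₜ[k] n₁ j →
    coact (m ⊗ₜ[k] n) = ∑ i ∈ s, ∑ j ∈ t, (m₀ i ⊗ₜ[k] n₀ j) ⊗ₜ[k] (m₁ i * n₁ j)

/-- Characterization of the action `(h · f)(m) = f (θ(h) · m)` on the dual space. -/
def DualActChar (θ : H → H) {M : Type} [AddCommGroup M] [Module k M]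
    (actM : H →ₗ[k] M →ₗ[k] M)
    (actD : H →ₗ[k] Module.Dual k M →ₗ[k] Module.Dual k M) : Prop :=
  ∀ (h : H) (f : Module.Dual k M) (m : M), actD h f m = f (actM (θ h) m)

/-- Characterization of the coaction `f₍₀₎(m) ⊗ f₍₁₎ = f(m₍₀₎) ⊗ σ(m₍₁₎)` on the dual space
(expressed through contraction against evaluation at each `m`). -/
def DualCoactChar (σ : H → H) {M : Type} [AddCommGroup M] [Module k M]
    (coactM : M →ₗ[k] M ⊗[k] H)
    (coactD : Module.Dual k M →ₗ[k] Module.Dual k M ⊗[k] H) : Prop :=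
  ∀ (f : Module.Dual k M) (m : M) (t : Finset ℕ) (m₀ : ℕ → M) (m₁ : ℕ → H),
    coactM m = ∑ j ∈ t, m₀ j ⊗ₜ[k] m₁ j →
    TensorProduct.lid k H (LinearMap.rTensor H (Module.Dual.eval k M m) (coactD f))
      = ∑ j ∈ t, f (m₀ j) • σ (m₁ j)

/-- Characterization of the action `(h · u)(m) = θ(h₁) · u (θ(S(h₂)) · m)` on `End(M)`. -/
def EndActChar (θ : H → H) {M : Type} [AddCommGroup M] [Module k M]
    (actM : H →ₗ[k] M →ₗ[k] M)
    (actE : H →ₗ[k] Module.End k M →ₗ[k] Module.End k M) : Prop :=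
  ∀ (h : H) (u : Module.End k M) (m : M) (s : Finset ℕ) (p q : ℕ → H),
    Coalgebra.comul (R := k) h = ∑ i ∈ s, p i ⊗ₜ[k] q i →
    actE h u m = ∑ i ∈ s,
      actM (θ (p i)) (u (actM (θ (HopfAlgebra.antipode (R := k) (q i))) m))

/-- Characterization of the coaction `u₍₀₎(m) ⊗ u₍₁₎ = u(m₍₀₎)₍₀₎ ⊗ Sinv(m₍₁₎) u(m₍₀₎)₍₁₎`
on `End(M)`, expressed through contraction against evaluation at each `m`. -/
def EndCoactChar (Sinv : H → H) {M : Type} [AddCommGroup M] [Module k M]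
    (coactM : M →ₗ[k] M ⊗[k] H)
    (coactE : Module.End k M →ₗ[k] Module.End k M ⊗[k] H) : Prop :=
  ∀ (u : Module.End k M) (m : M) (t : Finset ℕ) (m₀ : ℕ → M) (m₁ : ℕ → H)
    (r : ℕ → Finset ℕ) (n₀ : ℕ → ℕ → M) (n₁ : ℕ → ℕ → H),
    coactM m = ∑ j ∈ t, m₀ j ⊗ₜ[k] m₁ j →
    (∀ j ∈ t, coactM (u (m₀ j)) = ∑ l ∈ r j, n₀ j l ⊗ₜ[k] n₁ j l) →
    LinearMap.rTensor H (LinearMap.applyₗ (R := k) m) (coactE u)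
      = ∑ j ∈ t, ∑ l ∈ r j, n₀ j l ⊗ₜ[k] (Sinv (m₁ j) * n₁ j l)

/-- Characterization of the action `(h · u)(m) = θ(h₂) · u (θ(Sinv(h₁)) · m)` on `End(M)ᵒᵖ`. -/
def EndOpActChar (θ Sinv : H → H) {M : Type} [AddCommGroup M] [Module k M]
    (actM : H →ₗ[k] M →ₗ[k] M)
    (actE : H →ₗ[k] (Module.End k M)ᵐᵒᵖ →ₗ[k] (Module.End k M)ᵐᵒᵖ) : Prop :=
  ∀ (h : H) (u : (Module.End k M)ᵐᵒᵖ) (m : M) (s : Finset ℕ) (p q : ℕ → H),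
    Coalgebra.comul (R := k) h = ∑ i ∈ s, p i ⊗ₜ[k] q i →
    (actE h u).unop m = ∑ i ∈ s,
      actM (θ (q i)) (u.unop (actM (θ (Sinv (p i))) m))

/-- Characterization of the coaction `u₍₀₎(m) ⊗ u₍₁₎ = u(m₍₀₎)₍₀₎ ⊗ u(m₍₀₎)₍₁₎ S(m₍₁₎)`
on `End(M)ᵒᵖ`, expressed through contraction against evaluation at each `m`. -/
def EndOpCoactChar {M : Type} [AddCommGroup M] [Module k M]
    (coactM : M →ₗ[k] M ⊗[k] H)
    (coactE : (Module.End k M)ᵐᵒᵖ →ₗ[k] (Module.End k M)ᵐᵒᵖ ⊗[k] H) : Prop :=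
  ∀ (u : (Module.End k M)ᵐᵒᵖ) (m : M) (t : Finset ℕ) (m₀ : ℕ → M) (m₁ : ℕ → H)
    (r : ℕ → Finset ℕ) (n₀ : ℕ → ℕ → M) (n₁ : ℕ → ℕ → H),
    coactM m = ∑ j ∈ t, m₀ j ⊗ₜ[k] m₁ j →
    (∀ j ∈ t, coactM (u.unop (m₀ j)) = ∑ l ∈ r j, n₀ j l ⊗ₜ[k] n₁ j l) →
    LinearMap.rTensor H ((LinearMap.applyₗ (R := k) m).comp
        (MulOpposite.opLinearEquiv k).symm.toLinearMap) (coactE u)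
      = ∑ j ∈ t, ∑ l ∈ r j,
          n₀ j l ⊗ₜ[k] (n₁ j l * HopfAlgebra.antipode (R := k) (m₁ j))

/-- `A`, with the Yetter-Drinfeld structure `(act, coact)`, is an algebra in the braided
category of Yetter-Drinfeld modules over `H`. -/
def IsYDAlgebra (Sinv : H → H) {A : Type} [Ring A] [Algebra k A]
    (act : H →ₗ[k] A →ₗ[k] A) (coact : A →ₗ[k] A ⊗[k] H) : Prop :=
  IsYD k H Sinv id id act coact ∧
  (∀ (h : H) (a b : A) (s : Finset ℕ) (p q : ℕ → H),
    Coalgebra.comul (R := k) h = ∑ i ∈ s, p i ⊗ₜ[k] q i →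
    act h (a * b) = ∑ i ∈ s, act (p i) a * act (q i) b) ∧
  (∀ h : H, act h 1 = Coalgebra.counit (R := k) h • (1 : A)) ∧
  (coact 1 = (1 : A) ⊗ₜ[k] (1 : H)) ∧
  (∀ (a b : A) (s t : Finset ℕ) (a₀ : ℕ → A) (a₁ : ℕ → H) (b₀ : ℕ → A) (b₁ : ℕ → H),
    coact a = ∑ i ∈ s, a₀ i ⊗ₜ[k] a₁ i →
    coact b = ∑ j ∈ t, b₀ j ⊗ₜ[k] b₁ j →
    coact (a * b) = ∑ i ∈ s, ∑ j ∈ t, (a₀ i * b₀ j) ⊗ₜ[k] (b₁ j * a₁ i))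

/-- Characterization of the smash product multiplication
`(a # b)(a' # b') = a a'₍₀₎ # (a'₍₁₎ · b) b'` on `A ⊗ B`. -/
def SmashMulChar {A B : Type} [Ring A] [Algebra k A] [Ring B] [Algebra k B]
    (actB : H →ₗ[k] B →ₗ[k] B) (coactA : A →ₗ[k] A ⊗[k] H)
    (mul : (A ⊗[k] B) →ₗ[k] (A ⊗[k] B) →ₗ[k] (A ⊗[k] B)) : Prop :=
  ∀ (a a' : A) (b b' : B) (t : Finset ℕ) (a₀ : ℕ → A) (a₁ : ℕ → H),
    coactA a' = ∑ j ∈ t, a₀ j ⊗ₜ[k] a₁ j →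
    mul (a ⊗ₜ[k] b) (a' ⊗ₜ[k] b') = ∑ j ∈ t, (a * a₀ j) ⊗ₜ[k] (actB (a₁ j) b * b')

end GYD

/-!
Both structures on `End(M)` are conjugations. Let `π : H → End(M)` be the action. After twisting
the action of `M` by `α⁻¹` we may assume `α = id`, and then `h ↦ h·u` is `π * u * π⁻¹` in the
convolution ring `Hom(H, End(M))`. On the other hand, `u ⊗ h ↦ (m ⊗ x ↦ u(m) ⊗ xh)` embeds
`End(M) ⊗ H` in `End(M ⊗ H)`, with `H` reversed, and takes the coaction of `u` to `R (u ⊗ 1) R⁻¹`,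
where `R(m ⊗ x) = m₍₀₎ ⊗ x m₍₁₎`. Everything but the Yetter-Drinfeld compatibility follows:
multiplicativity is that of conjugation, and coassociativity is `(id ⊗ Δ)(R) = R₁₂ R₁₃`.

For the compatibility, let `p(h) = π(h) ⊗ 1` and let `s(h)`, `b(h)` be right multiplication of the
second factor of `M ⊗ H` by `h` and by `β(α⁻¹(h))`. The compatibility of `M` reads
`R * p = s⁻¹ * p * R * b` in `Hom(H, End(M ⊗ H))`. Conjugating `u ⊗ 1`, which commutes with `b`, by
both sides gives `R (p u p⁻¹) R⁻¹ = s⁻¹ (p (R u R⁻¹) p⁻¹) s`, the compatibility of `End(M)`.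
-/

namespace GYD

open Coalgebra HopfAlgebra WithConv

section FiniteSums

variable {R M N P : Type*} [CommSemiring R] [AddCommMonoid M] [Module R M]
  [AddCommMonoid N] [Module R N] [AddCommMonoid P] [Module R P]

theorem exists_sum_range_of_mem_closure {ι : Type*} [Nonempty ι] {f : ι → M} {x : M}
    (hx : x ∈ AddSubmonoid.closure (Set.range f)) :
    ∃ (n : ℕ) (g : ℕ → ι), x = ∑ i ∈ Finset.range n, f (g i) := by
  induction hx using AddSubmonoid.closure_induction_right with
  | zero => exact ⟨0, fun _ => Classical.arbitrary ι, by simp⟩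
  | add_right z y _ hy ih =>
    obtain ⟨j, rfl⟩ := hy
    obtain ⟨n, g, rfl⟩ := ih
    refine ⟨n + 1, fun | 0 => j | i + 1 => g i, ?_⟩
    rw [Finset.sum_range_succ']

theorem exists_sum_range_tmul (x : M ⊗[R] N) :
    ∃ (n : ℕ) (a : ℕ → M) (b : ℕ → N), x = ∑ i ∈ Finset.range n, a i ⊗ₜ[R] b i := by
  have hx : x ∈ AddSubmonoid.closure (Set.range fun p : M × N => p.1 ⊗ₜ[R] p.2) := by
    induction x with
    | zero => exact zero_mem _
    | tmul a b => exact AddSubmonoid.subset_closure ⟨(a, b), rfl⟩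
    | add x y hx hy => exact add_mem hx hy
  obtain ⟨n, g, h⟩ := exists_sum_range_of_mem_closure hx
  exact ⟨n, fun i => (g i).1, fun i => (g i).2, h⟩

theorem exists_sum_range_tmul_tmul (x : (M ⊗[R] N) ⊗[R] P) :
    ∃ (n : ℕ) (a : ℕ → M) (b : ℕ → N) (c : ℕ → P),
      x = ∑ i ∈ Finset.range n, (a i ⊗ₜ[R] b i) ⊗ₜ[R] c i := by
  have hx : x ∈ AddSubmonoid.closure
      (Set.range fun p : M × N × P => (p.1 ⊗ₜ[R] p.2.1) ⊗ₜ[R] p.2.2) := by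
    induction x with
    | zero => exact zero_mem _
    | tmul y c =>
      induction y with
      | zero => simp
      | tmul a b => exact AddSubmonoid.subset_closure ⟨(a, b, c), rfl⟩
      | add y z hy hz => simpa only [add_tmul] using add_mem hy hz
    | add x y hx hy => exact add_mem hx hy
  obtain ⟨n, g, h⟩ := exists_sum_range_of_mem_closure hx
  exact ⟨n, fun i => (g i).1, fun i => (g i).2.1, fun i => (g i).2.2, h⟩

end FiniteSums

section Comultiplication

theorem rTensor_comul_comul_coalgHom {R C D : Type*} [CommSemiring R] [AddCommMonoid C]
    [Module R C] [Coalgebra R C] [AddCommMonoid D] [Module R D] [Coalgebra R D] (φ : C →ₗc[R] D)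
    (c : C) : LinearMap.rTensor D (comul (R := R)) (comul (R := R) (φ c))
      = TensorProduct.map (TensorProduct.map φ.toLinearMap φ.toLinearMap) φ.toLinearMap
        (LinearMap.rTensor C (comul (R := R)) (comul (R := R) c)) := by
  have naturality :
      LinearMap.rTensor D (comul (R := R)) ∘ₗ TensorProduct.map φ.toLinearMap φ.toLinearMap
        = TensorProduct.map (TensorProduct.map φ.toLinearMap φ.toLinearMap) φ.toLinearMap
          ∘ₗ LinearMap.rTensor C (comul (R := R)) := by
    ext x y
    exact congrArg (· ⊗ₜ[R] φ y) (CoalgHomClass.map_comp_comul_apply φ x).symm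
  rw [← CoalgHomClass.map_comp_comul_apply]
  exact LinearMap.congr_fun naturality _

end Comultiplication

section Convolution

variable {R C A B ι : Type*} [CommSemiring R] [AddCommMonoid C] [Module R C] [Coalgebra R C]
  [Semiring A] [Algebra R A] [Semiring B] [Algebra R B]

theorem convMul_apply_of_comul_eq_sum {c : C} {s : Finset ι} {p q : ι → C}
    (h : comul (R := R) c = ∑ i ∈ s, p i ⊗ₜ[R] q i) (f g : WithConv (C →ₗ[R] A)) :
    (f * g) c = ∑ i ∈ s, f (p i) * g (q i) := by
  simp [h]

theorem convMul_convMul_apply_of_comul_eq_sum {x : C} {s : Finset ι} {a b c : ι → C}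
    (h : LinearMap.rTensor C (comul (R := R)) (comul (R := R) x)
      = ∑ i ∈ s, (a i ⊗ₜ[R] b i) ⊗ₜ[R] c i) (e f g : WithConv (C →ₗ[R] A)) :
    (e * f * g) x = ∑ i ∈ s, e (a i) * f (b i) * g (c i) := by
  have hmap : TensorProduct.map (e * f).ofConv g.ofConv
      = TensorProduct.map (LinearMap.mul' R A ∘ₗ TensorProduct.map e.ofConv f.ofConv) g.ofConv
        ∘ₗ LinearMap.rTensor C (comul (R := R)) := by
    ext; rfl
  rw [LinearMap.convMul_apply, hmap, LinearMap.comp_apply, h]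
  simp

/-- The homomorphism of convolution rings given by composition with an algebra homomorphism. -/
def convPostcomp (φ : A →ₐ[R] B) : WithConv (C →ₗ[R] A) →+* WithConv (C →ₗ[R] B) where
  toFun f := toConv (φ.toLinearMap ∘ₗ f.ofConv)
  map_one' := by ext c; simp
  map_mul' f g := by rw [LinearMap.algHom_comp_convMul_distrib]
  map_zero' := by ext c; simp
  map_add' f g := by ext c; simp

@[simp]
theorem convPostcomp_apply (φ : A →ₐ[R] B) (f : WithConv (C →ₗ[R] A)) (c : C) :
    convPostcomp φ f c = φ (f c) := rfl

theorem toSpanSingleton_comp_counit_convMul_apply (x : A) (f : WithConv (C →ₗ[R] A)) (c : C) :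
    (toConv (LinearMap.toSpanSingleton R A x ∘ₗ counit (A := C)) * f : WithConv (C →ₗ[R] A)) c
      = x * f c := by
  have hmap : TensorProduct.map (LinearMap.toSpanSingleton R A x ∘ₗ counit (A := C)) f.ofConv
      = TensorProduct.map (LinearMap.toSpanSingleton R A x) f.ofConv
        ∘ₗ LinearMap.rTensor C (counit (R := R) (A := C)) := by
    ext; rfl
  rw [LinearMap.convMul_apply, hmap, LinearMap.comp_apply, rTensor_counit_comul]
  simp

variable (R C) in
/-- The embedding of an algebra `A` into its convolution ring, sending `x` to `c ↦ ε(c) x`. -/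
def convConst : A →+* WithConv (C →ₗ[R] A) where
  toFun x := toConv (LinearMap.toSpanSingleton R A x ∘ₗ counit (A := C))
  map_one' := by ext c; simp [Algebra.algebraMap_eq_smul_one]
  map_mul' x y := by
    ext c
    rw [toSpanSingleton_comp_counit_convMul_apply]
    simp
  map_zero' := by ext c; simp
  map_add' x y := by ext c; simp

theorem convConst_mul_apply (x : A) (f : WithConv (C →ₗ[R] A)) (c : C) :
    (convConst R C x * f) c = x * f c :=
  toSpanSingleton_comp_counit_convMul_apply x f c

theorem mul_convConst_apply (f : WithConv (C →ₗ[R] A)) (x : A) (c : C) :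
    (f * convConst R C x) c = f c * x := by
  have hmap : TensorProduct.map f.ofConv (convConst R C x).ofConv
      = TensorProduct.map f.ofConv (LinearMap.toSpanSingleton R A x)
        ∘ₗ LinearMap.lTensor C (counit (R := R)) := by
    ext; rfl
  rw [LinearMap.convMul_apply, hmap, LinearMap.comp_apply, lTensor_counit_comul]
  simp

end Convolution

section Antipode

variable {R H K A : Type*} [CommSemiring R] [Semiring H] [HopfAlgebra R H]
  [Semiring K] [HopfAlgebra R K] [Semiring A] [Algebra R A]

theorem antipode_bialgHom (φ : H →ₐc[R] K) (h : H) :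
    antipode R (φ h) = φ (antipode R h) := by
  let f : WithConv (H →ₗ[R] K) := toConv φ.toLinearMap
  have left_inv : toConv (antipode R ∘ₗ φ.toLinearMap) * f = 1 := by
    have := LinearMap.convMul_comp_coalgHom_distrib (toConv (antipode R (A := K))) (toConv .id)
      φ.toCoalgHom
    rw [LinearMap.antipode_mul_id] at this
    ext h
    simpa using! (LinearMap.congr_fun this h).symm
  have right_inv : f * toConv (φ.toLinearMap ∘ₗ antipode R) = 1 := by
    have := map_mul (convPostcomp (φ : H →ₐ[R] K)) (toConv .id) (toConv (antipode R (A := H)))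
    rw [LinearMap.id_mul_antipode, map_one] at this
    exact this.symm
  exact LinearMap.congr_fun (toConv_injective (left_inv_eq_right_inv left_inv right_inv)) h

variable (R H) in
/-- The identity of a Hopf algebra as a unit of the convolution ring, inverse to the antipode. -/
def idConvUnit : (WithConv (H →ₗ[R] H))ˣ where
  val := toConv .id
  inv := toConv (antipode R)
  val_inv := LinearMap.id_mul_antipode
  inv_val := LinearMap.antipode_mul_id

/-- The canonical map `H → Hᵐᵒᵖ` as a unit of the convolution ring, inverse to the composition
inverse `T` of the antipode. -/
def opConvUnit (T : H →ₗ[R] H) (hST : Function.LeftInverse (antipode R) T)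
    (hTS : Function.LeftInverse T (antipode R)) : (WithConv (H →ₗ[R] Hᵐᵒᵖ))ˣ where
  val := toConv (MulOpposite.opLinearEquiv R).toLinearMap
  inv := toConv ((MulOpposite.opLinearEquiv R).toLinearMap ∘ₗ T)
  val_inv := by
    ext h
    apply MulOpposite.unop_injective
    apply hTS.injective
    simp [(ℛ R h).convMul_apply, antipode_mul_antidistrib, hST _,
      sum_antipode_mul_eq_algebraMap_counit, Algebra.algebraMap_eq_smul_one]
  inv_val := by
    ext h
    apply MulOpposite.unop_injective
    apply hTS.injective
    simp [(ℛ R h).convMul_apply, antipode_mul_antidistrib, hST _,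
      sum_mul_antipode_eq_algebraMap_counit, Algebra.algebraMap_eq_smul_one]

/-- An algebra homomorphism out of a Hopf algebra as a unit of the convolution ring. -/
def convUnit (π : H →ₐ[R] A) : (WithConv (H →ₗ[R] A))ˣ :=
  Units.map (convPostcomp π).toMonoidHom (idConvUnit R H)

/-- The adjoint action `h ↦ π(h₁) x π(S(h₂))` of `H` on an algebra `A` along `π : H → A`, as the
conjugate of the constant `x` by `π` in the convolution ring. -/
def adjointAction (π : H →ₐ[R] A) (x : A) : WithConv (H →ₗ[R] A) :=
  convUnit π * convConst R H x * ↑(convUnit π)⁻¹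

theorem adjointAction_apply_of_comul_eq_sum {ι : Type*} {h : H} {s : Finset ι} {p q : ι → H}
    (hh : comul (R := R) h = ∑ i ∈ s, p i ⊗ₜ[R] q i) (π : H →ₐ[R] A) (x : A) :
    adjointAction π x h = ∑ i ∈ s, π (p i) * x * π (antipode R (q i)) := by
  simp only [adjointAction, convMul_apply_of_comul_eq_sum hh, mul_convConst_apply]
  rfl

theorem adjointAction_one (π : H →ₐ[R] A) : adjointAction π 1 = 1 := by
  simp [adjointAction]

theorem adjointAction_mul (π : H →ₐ[R] A) (x y : A) :
    adjointAction π (x * y) = adjointAction π x * adjointAction π y := by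
  simp [adjointAction, mul_assoc]

theorem adjointAction_apply_one (π : H →ₐ[R] A) (x : A) : adjointAction π x 1 = x := by
  rw [adjointAction_apply_of_comul_eq_sum (s := {()}) (p := fun _ => 1) (q := fun _ => 1)
    (by simp [Algebra.TensorProduct.one_def])]
  simp

theorem adjointAction_apply_mul (π : H →ₐ[R] A) (x : A) (g h : H) :
    adjointAction π x (g * h) = adjointAction π (adjointAction π x h) g := by
  have comul_gh : comul (R := R) (g * h) = ∑ i ∈ (ℛ R g).index ×ˢ (ℛ R h).index,
      ((ℛ R g).left i.1 * (ℛ R h).left i.2) ⊗ₜ[R] ((ℛ R g).right i.1 * (ℛ R h).right i.2) := by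
    rw [Bialgebra.comul_mul, ← (ℛ R g).eq, ← (ℛ R h).eq, Finset.sum_mul_sum,
      Finset.sum_product]
    simp only [Algebra.TensorProduct.tmul_mul_tmul]
  simp only [adjointAction_apply_of_comul_eq_sum comul_gh,
    adjointAction_apply_of_comul_eq_sum (ℛ R g).eq.symm,
    adjointAction_apply_of_comul_eq_sum (ℛ R h).eq.symm, Finset.sum_product, Finset.mul_sum,
    Finset.sum_mul, antipode_mul_antidistrib, map_mul, mul_assoc]

theorem map_adjointAction {B : Type*} [Semiring B] [Algebra R B] (φ : A →ₐ[R] B)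
    (π : H →ₐ[R] A) (x : A) (h : H) :
    φ (adjointAction π x h) = adjointAction (φ.comp π) (φ x) h := by
  simp [adjointAction_apply_of_comul_eq_sum (ℛ R h).eq.symm]

end Antipode

section Coaction

variable {R C M X : Type*} [CommSemiring R] [AddCommMonoid C] [Module R C]
  [AddCommMonoid M] [Module R M] [AddCommMonoid X] [Module R X]

/-- The operator `m ⊗ x ↦ m₍₀₎ ⊗ σ(m₍₁₎) x` on `M ⊗ X` attached to a family of operators `σ`
on `X` indexed by the coacting coalgebra. -/
def coactionOperator (ρ : M →ₗ[R] M ⊗[R] C) (σ : WithConv (C →ₗ[R] Module.End R X)) :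
    Module.End R (M ⊗[R] X) :=
  LinearMap.lTensor M (TensorProduct.lift σ.ofConv)
    ∘ₗ (TensorProduct.assoc R M C X).toLinearMap ∘ₗ LinearMap.rTensor X ρ

theorem coactionOperator_tmul (ρ : M →ₗ[R] M ⊗[R] C) (σ : WithConv (C →ₗ[R] Module.End R X))
    (m : M) (x : X) :
    coactionOperator ρ σ (m ⊗ₜ[R] x) = LinearMap.lTensor M (σ.ofConv.flip x) (ρ m) := by
  simp only [coactionOperator, LinearMap.comp_apply, LinearMap.rTensor_tmul]
  induction ρ m with
  | zero => simp
  | tmul n c => simp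
  | add a b ha hb => simp only [TensorProduct.add_tmul, map_add, ha, hb]

theorem commute_coactionOperator_lTensor (ρ : M →ₗ[R] M ⊗[R] C)
    {σ : WithConv (C →ₗ[R] Module.End R X)} {τ : Module.End R X} (hτ : ∀ c, Commute (σ c) τ) :
    Commute (coactionOperator ρ σ) (LinearMap.lTensor M τ) := by
  refine TensorProduct.ext' fun m x => ?_
  simp only [Module.End.mul_apply, LinearMap.lTensor_tmul, coactionOperator_tmul]
  rw [← LinearMap.lTensor_comp_apply]
  congr 2
  ext c
  exact LinearMap.congr_fun (hτ c) x

variable [Coalgebra R C]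

/-- `ρ` makes `M` a right comodule over the coalgebra `C`. -/
structure IsCoaction (ρ : M →ₗ[R] M ⊗[R] C) : Prop where
  coassoc (m : M) : LinearMap.rTensor C ρ (ρ m)
    = (TensorProduct.assoc R M C C).symm (LinearMap.lTensor M (comul (R := R)) (ρ m))
  rid_counit (m : M) :
    TensorProduct.rid R M (LinearMap.lTensor M (counit (R := R)) (ρ m)) = m

namespace IsCoaction

variable {ρ : M →ₗ[R] M ⊗[R] C}

theorem coactionOperator_one (hρ : IsCoaction ρ) :
    coactionOperator ρ (1 : WithConv (C →ₗ[R] Module.End R X)) = 1 := by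
  refine TensorProduct.ext' fun m x => ?_
  have flip_one : (1 : WithConv (C →ₗ[R] Module.End R X)).ofConv.flip x
      = LinearMap.toSpanSingleton R X x ∘ₗ counit := by
    ext c; simp
  rw [coactionOperator_tmul, flip_one, LinearMap.lTensor_comp_apply]
  have rid_symm := congrArg (TensorProduct.rid R M).symm (hρ.rid_counit m)
  rw [LinearEquiv.symm_apply_apply] at rid_symm
  simp [rid_symm]

theorem coactionOperator_mul (hρ : IsCoaction ρ) (σ τ : WithConv (C →ₗ[R] Module.End R X)) :
    coactionOperator ρ (σ * τ) = coactionOperator ρ σ * coactionOperator ρ τ := by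
  refine TensorProduct.ext' fun m x => ?_
  let act₂ : C ⊗[R] C →ₗ[R] X :=
    LinearMap.applyₗ x ∘ₗ LinearMap.mul' R (Module.End R X) ∘ₗ TensorProduct.map σ.ofConv τ.ofConv
  have iterate (w : M ⊗[R] C) : coactionOperator ρ σ (LinearMap.lTensor M (τ.ofConv.flip x) w)
      = LinearMap.lTensor M act₂ (TensorProduct.assoc R M C C (LinearMap.rTensor C ρ w)) := by
    induction w with
    | zero => simp
    | add a b ha hb => simp only [map_add, ha, hb]
    | tmul n c =>
      simp only [LinearMap.lTensor_tmul, LinearMap.rTensor_tmul, coactionOperator_tmul]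
      induction ρ n with
      | zero => simp
      | add a b ha hb => simp only [map_add, add_tmul, ha, hb]
      | tmul n d => rfl
  rw [Module.End.mul_apply, coactionOperator_tmul, coactionOperator_tmul, iterate, hρ.coassoc,
    LinearEquiv.apply_symm_apply, ← LinearMap.lTensor_comp_apply]
  rfl

/-- `coactionOperator` as a homomorphism from the convolution monoid. -/
def operatorHom (hρ : IsCoaction ρ) :
    WithConv (C →ₗ[R] Module.End R X) →* Module.End R (M ⊗[R] X) where
  toFun := coactionOperator ρ
  map_one' := hρ.coactionOperator_one
  map_mul' := hρ.coactionOperator_mul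

end IsCoaction

end Coaction

section TensorOperator

variable {R H A M N P X : Type*} [CommSemiring R] [Semiring H] [Algebra R H]
  [Semiring A] [Algebra R A] [AddCommMonoid M] [Module R M] [AddCommMonoid N] [Module R N]
  [AddCommMonoid P] [Module R P] [AddCommMonoid X] [Module R X]

/-- Right multiplication through an algebra homomorphism `f : H → A`, as an action of `Hᵐᵒᵖ`
on `A`. -/
def rightMul (f : H →ₐ[R] A) : Hᵐᵒᵖ →ₐ[R] Module.End R A :=
  (Algebra.lsmul R R A).comp f.op

@[simp]
theorem rightMul_apply (f : H →ₐ[R] A) (h : Hᵐᵒᵖ) (x : A) :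
    rightMul f h x = x * f h.unop := rfl

/-- The map `u ⊗ h ↦ u ⊗ σ(h)` from `End(M) ⊗ H` to operators on `M ⊗ X`, for a right action `σ`
of `H` on `X`. -/
def tensorOperator (σ : Hᵐᵒᵖ →ₐ[R] Module.End R X) :
    Module.End R M ⊗[R] H →ₗ[R] Module.End R (M ⊗[R] X) :=
  TensorProduct.homTensorHomMap (.id R) M X M X
    ∘ₗ LinearMap.lTensor _ (σ.toLinearMap ∘ₗ (MulOpposite.opLinearEquiv R).toLinearMap)

@[simp]
theorem tensorOperator_tmul (σ : Hᵐᵒᵖ →ₐ[R] Module.End R X) (u : Module.End R M) (h : H) :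
    tensorOperator σ (u ⊗ₜ[R] h) = TensorProduct.map u (σ (.op h)) := rfl

theorem tensorOperator_tmul_mul_tmul (σ : Hᵐᵒᵖ →ₐ[R] Module.End R X) (u v : Module.End R M)
    (g h : H) :
    tensorOperator σ (u ⊗ₜ[R] g) * tensorOperator σ (v ⊗ₜ[R] h)
      = tensorOperator σ ((u * v) ⊗ₜ[R] (h * g)) := by
  simp [TensorProduct.map_mul]

theorem tensorOperator_apply_tmul (σ : Hᵐᵒᵖ →ₐ[R] Module.End R X) (w : Module.End R M ⊗[R] H)
    (m : M) (x : X) :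
    tensorOperator σ w (m ⊗ₜ[R] x)
      = LinearMap.lTensor M
          ((σ.toLinearMap ∘ₗ (MulOpposite.opLinearEquiv R).toLinearMap).flip x)
          (LinearMap.rTensor H (LinearMap.applyₗ m) w) := by
  induction w with
  | zero => simp
  | tmul u h => simp
  | add a b ha hb => simp only [map_add, LinearMap.add_apply, ha, hb]

theorem tensorOperator_rightMul (f : H →ₐ[R] A) (w : Module.End R M ⊗[R] H) :
    tensorOperator (rightMul f) w
      = tensorOperator (rightMul (.id R A)) (LinearMap.lTensor _ f.toLinearMap w) := by
  induction w with
  | zero => simp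
  | tmul u h => rfl
  | add a b ha hb => simp only [map_add, ha, hb]

open Algebra.TensorProduct in
theorem tensorOperator_assoc_tmul (t : Module.End R M ⊗[R] H) (y : A) :
    tensorOperator (rightMul (.id R (H ⊗[R] A))) (TensorProduct.assoc R _ H A (t ⊗ₜ[R] y))
      = tensorOperator (rightMul includeLeft) t
        * LinearMap.lTensor M (rightMul (includeRight : A →ₐ[R] H ⊗[R] A) (.op y)) := by
  induction t with
  | zero => simp
  | add a b ha hb => simp only [TensorProduct.add_tmul, map_add, add_mul, ha, hb]
  | tmul v g =>
    refine TensorProduct.ext' fun m x => ?_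
    simp [mul_assoc]

theorem ext_rTensor_applyₗ [Module.Free R N] {v w : (M →ₗ[R] P) ⊗[R] N}
    (h : ∀ m, LinearMap.rTensor N (LinearMap.applyₗ (R := R) m) v
      = LinearMap.rTensor N (LinearMap.applyₗ m) w) : v = w := by
  let b := Module.Free.chooseBasis R N
  have coord (m : M) (t : (M →ₗ[R] P) ⊗[R] N) (i) :
      TensorProduct.equivFinsuppOfBasisRight b
          (LinearMap.rTensor N (LinearMap.applyₗ (R := R) m) t) i
        = TensorProduct.equivFinsuppOfBasisRight b t i m := by
    induction t with
    | zero => simp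
    | tmul u n => simp
    | add a b ha hb => simp only [map_add, Finsupp.add_apply, LinearMap.add_apply, ha, hb]
  apply (TensorProduct.equivFinsuppOfBasisRight b).injective
  ext i m
  rw [← coord, ← coord, h]

theorem tensorOperator_rightMul_id_injective [Module.Free R A] :
    Function.Injective (tensorOperator (M := M) (rightMul (.id R A))) := by
  intro v w h
  refine ext_rTensor_applyₗ fun m => ?_
  have eval_one (t : Module.End R M ⊗[R] A) :
      tensorOperator (rightMul (.id R A)) t (m ⊗ₜ[R] 1)
        = LinearMap.rTensor A (LinearMap.applyₗ m) t := by
    have flip_one : ((rightMul (.id R A)).toLinearMap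
        ∘ₗ (MulOpposite.opLinearEquiv R).toLinearMap).flip 1 = LinearMap.id := by
      ext a; simp
    rw [tensorOperator_apply_tmul, flip_one, LinearMap.lTensor_id_apply]
  rw [← eval_one, ← eval_one, h]

end TensorOperator

section CoactionUnit

variable {R H M X : Type*} [CommSemiring R] [Semiring H] [HopfAlgebra R H]
  [AddCommMonoid M] [Module R M] [AddCommMonoid X] [Module R X]
  {ρ : M →ₗ[R] M ⊗[R] H} (hρ : IsCoaction ρ) {T : H →ₗ[R] H}
  (hST : Function.LeftInverse (antipode R) T) (hTS : Function.LeftInverse T (antipode R))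

/-- The invertible operator `m ⊗ x ↦ m₍₀₎ ⊗ σ(m₍₁₎) x` on `M ⊗ X`, for a right action `σ` of `H`
on `X`; its inverse is `m ⊗ x ↦ m₍₀₎ ⊗ σ(T(m₍₁₎)) x`. -/
def coactionUnit (σ : Hᵐᵒᵖ →ₐ[R] Module.End R X) : (Module.End R (M ⊗[R] X))ˣ :=
  Units.map (hρ.operatorHom.comp (convPostcomp σ).toMonoidHom) (opConvUnit T hST hTS)

theorem coactionUnit_tmul (σ : Hᵐᵒᵖ →ₐ[R] Module.End R X) (m : M) (x : X) :
    (coactionUnit hρ hST hTS σ).val (m ⊗ₜ[R] x) = LinearMap.lTensor M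
      ((σ.toLinearMap ∘ₗ (MulOpposite.opLinearEquiv R).toLinearMap).flip x) (ρ m) :=
  coactionOperator_tmul ..

theorem coactionUnit_inv_tmul (σ : Hᵐᵒᵖ →ₐ[R] Module.End R X) (m : M) (x : X) :
    (coactionUnit hρ hST hTS σ)⁻¹.val (m ⊗ₜ[R] x) = LinearMap.lTensor M
      ((σ.toLinearMap ∘ₗ (MulOpposite.opLinearEquiv R).toLinearMap ∘ₗ T).flip x) (ρ m) :=
  coactionOperator_tmul ..

theorem coactionUnit_rightMul_counit :
    coactionUnit hρ hST hTS (rightMul (Bialgebra.counitAlgHom R H)) = 1 := by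
  have counit_unit :
      convPostcomp (rightMul (Bialgebra.counitAlgHom R H)) (opConvUnit T hST hTS).val = 1 := by
    ext h; simp [opConvUnit]
  ext1
  exact (congrArg hρ.operatorHom counit_unit).trans (map_one _)

theorem coactionUnit_rightMul_comul :
    coactionUnit hρ hST hTS (rightMul (Bialgebra.comulAlgHom R H))
      = coactionUnit hρ hST hTS (rightMul Algebra.TensorProduct.includeLeft)
        * coactionUnit hρ hST hTS (rightMul Algebra.TensorProduct.includeRight) := by
  have comul_unit : convPostcomp (rightMul (Bialgebra.comulAlgHom R H)) (opConvUnit T hST hTS).val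
      = convPostcomp (rightMul Algebra.TensorProduct.includeLeft) (opConvUnit T hST hTS).val
        * convPostcomp (rightMul Algebra.TensorProduct.includeRight)
          (opConvUnit T hST hTS).val := by
    ext h x
    simp [opConvUnit, (ℛ R h).convMul_apply, ← (ℛ R h).eq, Finset.mul_sum]
  ext1
  exact (congrArg hρ.operatorHom comul_unit).trans (map_mul _ _ _)

theorem commute_coactionUnit_lTensor {σ : Hᵐᵒᵖ →ₐ[R] Module.End R X} {τ : Module.End R X}
    (hτ : ∀ h, Commute (σ h) τ) :
    Commute (coactionUnit hρ hST hTS σ : Module.End R (M ⊗[R] X)) (LinearMap.lTensor M τ) :=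
  commute_coactionOperator_lTensor ρ fun h => hτ (.op h)

end CoactionUnit

section EndCoaction

variable {k H M : Type} [Field k] [Ring H] [HopfAlgebra k H] [AddCommGroup M] [Module k M]
  {X : Type*} [AddCommMonoid X] [Module k X]
  {ρ : M →ₗ[k] M ⊗[k] H} {T : H →ₗ[k] H}
  {ρE : Module.End k M →ₗ[k] Module.End k M ⊗[k] H}

theorem IsAntipodeInv.leftInverse {Sinv : H → H} (hS : IsAntipodeInv k H Sinv) :
    Function.LeftInverse (antipode k) Sinv := hS.1

theorem IsAntipodeInv.rightInverse {Sinv : H → H} (hS : IsAntipodeInv k H Sinv) :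
    Function.LeftInverse Sinv (antipode k) := hS.2

theorem EndCoactChar.tensorOperator_eq_conj (hE : EndCoactChar k H T ρ ρE) (hρ : IsCoaction ρ)
    (hT : IsAntipodeInv k H T)
    (σ : Hᵐᵒᵖ →ₐ[k] Module.End k X) (u : Module.End k M) :
    tensorOperator σ (ρE u)
      = coactionUnit hρ hT.leftInverse hT.rightInverse σ * LinearMap.rTensor X u
        * ↑(coactionUnit hρ hT.leftInverse hT.rightInverse σ)⁻¹ := by
  refine TensorProduct.ext' fun m x => ?_
  obtain ⟨n, m₀, m₁, hm⟩ := exists_sum_range_tmul (ρ m)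
  choose r n₀ n₁ hn using fun j => exists_sum_range_tmul (ρ (u (m₀ j)))
  rw [tensorOperator_apply_tmul, hE u m _ m₀ m₁ _ n₀ n₁ hm fun j _ => hn j]
  simp only [Module.End.mul_apply, coactionUnit_inv_tmul, hm, map_sum, LinearMap.lTensor_tmul,
    LinearMap.rTensor_tmul, coactionUnit_tmul, hn]
  simp

theorem EndCoactChar.map_one (hE : EndCoactChar k H T ρ ρE) (hρ : IsCoaction ρ)
    (hT : IsAntipodeInv k H T) :
    ρE 1 = 1 ⊗ₜ[k] 1 := by
  apply tensorOperator_rightMul_id_injective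
  have rTensor_one : LinearMap.rTensor H (1 : Module.End k M) = 1 := LinearMap.rTensor_id H M
  rw [hE.tensorOperator_eq_conj hρ hT, rTensor_one]
  simp

theorem EndCoactChar.map_mul (hE : EndCoactChar k H T ρ ρE) (hρ : IsCoaction ρ)
    (hT : IsAntipodeInv k H T)
    {ι κ : Type*} {u v : Module.End k M} {s : Finset ι} {t : Finset κ}
    {u₀ : ι → Module.End k M} {u₁ : ι → H} {v₀ : κ → Module.End k M} {v₁ : κ → H}
    (hu : ρE u = ∑ i ∈ s, u₀ i ⊗ₜ[k] u₁ i) (hv : ρE v = ∑ j ∈ t, v₀ j ⊗ₜ[k] v₁ j) :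
    ρE (u * v) = ∑ i ∈ s, ∑ j ∈ t, (u₀ i * v₀ j) ⊗ₜ[k] (v₁ j * u₁ i) := by
  apply tensorOperator_rightMul_id_injective
  have conj_mul : tensorOperator (rightMul (.id k H)) (ρE (u * v))
      = tensorOperator (rightMul (.id k H)) (ρE u)
        * tensorOperator (rightMul (.id k H)) (ρE v) := by
    simp [hE.tensorOperator_eq_conj hρ hT, mul_assoc, LinearMap.rTensor_mul]
  simp only [conj_mul, hu, hv, map_sum, Finset.sum_mul_sum, tensorOperator_tmul_mul_tmul]

theorem EndCoactChar.lTensor_counit (hE : EndCoactChar k H T ρ ρE) (hρ : IsCoaction ρ)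
    (hT : IsAntipodeInv k H T) (u : Module.End k M) :
    LinearMap.lTensor _ (counit (R := k)) (ρE u) = u ⊗ₜ[k] 1 := by
  apply tensorOperator_rightMul_id_injective
  have := tensorOperator_rightMul (Bialgebra.counitAlgHom k H) (ρE u)
  rw [hE.tensorOperator_eq_conj hρ hT, coactionUnit_rightMul_counit] at this
  refine this.symm.trans ?_
  rw [Units.val_one, inv_one, Units.val_one, one_mul, mul_one, tensorOperator_tmul,
    MulOpposite.op_one, _root_.map_one]
  rfl

open Algebra.TensorProduct in
theorem EndCoactChar.tensorOperator_assoc_rTensor (hE : EndCoactChar k H T ρ ρE)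
    (hρ : IsCoaction ρ) (hT : IsAntipodeInv k H T) (w : Module.End k M ⊗[k] H) :
    tensorOperator (rightMul (.id k (H ⊗[k] H)))
        (TensorProduct.assoc k _ H H (LinearMap.rTensor H ρE w))
      = (coactionUnit hρ hT.leftInverse hT.rightInverse
          (rightMul (includeLeft : H →ₐ[k] H ⊗[k] H))).val
        * tensorOperator (rightMul (includeRight : H →ₐ[k] H ⊗[k] H)) w
        * (coactionUnit hρ hT.leftInverse hT.rightInverse
          (rightMul (includeLeft : H →ₐ[k] H ⊗[k] H)))⁻¹.val := by
  set U := coactionUnit hρ hT.leftInverse hT.rightInverse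
    (rightMul (includeLeft : H →ₐ[k] H ⊗[k] H))
  induction w with
  | zero => simp
  | add a b ha hb => simp only [map_add, mul_add, add_mul, ha, hb]
  | tmul v y =>
    let τ := rightMul (includeRight : H →ₐ[k] H ⊗[k] H) (.op y)
    have commute_τ : Commute (↑U⁻¹ : Module.End k (M ⊗[k] (H ⊗[k] H))) (LinearMap.lTensor M τ) :=
      (commute_coactionUnit_lTensor hρ hT.leftInverse hT.rightInverse fun h =>
        LinearMap.ext fun x => by simp [τ, mul_assoc]).units_inv_left
    calc
      _ = tensorOperator (rightMul includeLeft) (ρE v) * LinearMap.lTensor M τ :=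
          tensorOperator_assoc_tmul _ _
      _ = U.val * LinearMap.rTensor (H ⊗[k] H) v * U⁻¹.val * LinearMap.lTensor M τ := by
          rw [hE.tensorOperator_eq_conj hρ hT]
      _ = U.val * (LinearMap.rTensor (H ⊗[k] H) v * LinearMap.lTensor M τ) * U⁻¹.val := by
          simp only [mul_assoc, commute_τ.eq]
      _ = _ := congrArg (U.val * · * U⁻¹.val) (LinearMap.rTensor_comp_lTensor ..)

theorem EndCoactChar.isCoaction (hE : EndCoactChar k H T ρ ρE) (hρ : IsCoaction ρ)
    (hT : IsAntipodeInv k H T) : IsCoaction ρE where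
  coassoc u := by
    apply (TensorProduct.assoc k _ H H).injective
    apply tensorOperator_rightMul_id_injective
    have := tensorOperator_rightMul (Bialgebra.comulAlgHom k H) (ρE u)
    rw [hE.tensorOperator_assoc_rTensor hρ hT, hE.tensorOperator_eq_conj hρ hT,
      LinearEquiv.apply_symm_apply]
    refine Eq.trans ?_ this
    rw [hE.tensorOperator_eq_conj hρ hT, coactionUnit_rightMul_comul]
    simp [mul_assoc]
  rid_counit u := by
    rw [hE.lTensor_counit hρ hT]
    simp

end EndCoaction

section EndAction

variable {k H M : Type} [Field k] [Ring H] [HopfAlgebra k H] [AddCommGroup M] [Module k M]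
  {T : H →ₗ[k] H} {α β : H → H} {act : H →ₗ[k] M →ₗ[k] M} {ρ : M →ₗ[k] M ⊗[k] H}
  {actE : H →ₗ[k] Module.End k M →ₗ[k] Module.End k M}

theorem IsYD.isCoaction {Sinv : H → H} (hM : IsYD k H Sinv α β act ρ) : IsCoaction ρ :=
  ⟨hM.2.2.1, hM.2.2.2.1⟩

/-- The algebra homomorphism `H → End(M)` given by the action of a Yetter-Drinfeld module. -/
def IsYD.algHom {Sinv : H → H} (hM : IsYD k H Sinv α β act ρ) : H →ₐ[k] Module.End k M :=
  .ofLinearMap act (LinearMap.ext hM.1) fun g h => LinearMap.ext (hM.2.1 g h)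

theorem EndActChar.eq_adjointAction (hE : EndActChar k H id act actE) {π : H →ₐ[k] Module.End k M}
    (hπ : π.toLinearMap = act) (u : Module.End k M) (h : H) :
    actE h u = adjointAction π u h := by
  obtain ⟨n, p, q, hpq⟩ := exists_sum_range_tmul (comul (R := k) h)
  subst hπ
  ext m
  rw [hE h u m _ p q hpq, adjointAction_apply_of_comul_eq_sum hpq]
  simp

end EndAction

section Compatibility

theorem conj_conj_eq_of_mul_eq {G : Type*} [Monoid G] {r p a : Gˣ} {b u : G}
    (h : (r * p : G) = a⁻¹.val * (p * r) * b) (hb : Commute b u) :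
    (r * (p * u * p⁻¹.val) * r⁻¹.val : G) = a⁻¹.val * (p * (r * u * r⁻¹.val) * p⁻¹.val) * a := by
  rw [← Units.mul_left_inj (r * p)]
  have : (a * (r * p) : G) = p * (r * b) := by simp [h, mul_assoc]
  calc (r * (p * u * p⁻¹.val) * r⁻¹.val * ↑(r * p) : G) = r * p * u := by simp [mul_assoc]
    _ = a⁻¹.val * (p * r) * (u * b) := by rw [h, mul_assoc, hb.eq]
    _ = a⁻¹.val * (p * (r * u * r⁻¹.val) * p⁻¹.val) * a * ↑(r * p) := by
      rw [Units.val_mul, mul_assoc _ a.val, this]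
      simp [mul_assoc]

variable {k H M : Type} [Field k] [Ring H] [HopfAlgebra k H] [AddCommGroup M] [Module k M]
  {T γ : H →ₗ[k] H} {act : H →ₗ[k] M →ₗ[k] M} {ρ : M →ₗ[k] M ⊗[k] H}
  {actE : H →ₗ[k] Module.End k M →ₗ[k] Module.End k M}
  {ρE : Module.End k M →ₗ[k] Module.End k M ⊗[k] H}

variable (k H M) in
/-- The right action `h ↦ (m ⊗ x ↦ m ⊗ xh)` of `H` on `M ⊗ H`. -/
def tensorRightMul : Hᵐᵒᵖ →ₐ[k] Module.End k (M ⊗[k] H) :=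
  (Module.End.lTensorAlgHom k H M).comp (rightMul (.id k H))

theorem tensorRightMul_apply_tmul (g : Hᵐᵒᵖ) (m : M) (x : H) :
    tensorRightMul k H M g (m ⊗ₜ[k] x) = m ⊗ₜ[k] (x * g.unop) := rfl

variable (M) in
/-- The operators `m ⊗ x ↦ m ⊗ xh` as a unit of the convolution ring, with inverse
`m ⊗ x ↦ m ⊗ xT(h)`. -/
def tensorRightMulUnit (hT : IsAntipodeInv k H T) :
    (WithConv (H →ₗ[k] Module.End k (M ⊗[k] H)))ˣ :=
  Units.map (convPostcomp (tensorRightMul k H M)).toMonoidHom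
    (opConvUnit T hT.leftInverse hT.rightInverse)

theorem tensorRightMulUnit_apply (hT : IsAntipodeInv k H T) (h : H) :
    (tensorRightMulUnit M hT).val h = tensorRightMul k H M (.op h) := rfl

theorem tensorRightMulUnit_inv_apply (hT : IsAntipodeInv k H T) (h : H) :
    (tensorRightMulUnit M hT)⁻¹.val h = tensorRightMul k H M (.op (T h)) := rfl

theorem tensorOperator_rTensor_adjointAction {A : Type*} [Semiring A] [Algebra k A]
    (π : H →ₐ[k] Module.End k M) {h : H} {f : Module.End k M →ₗ[k] Module.End k M}
    (hf : ∀ u, f u = adjointAction π u h) (w : Module.End k M ⊗[k] A) :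
    tensorOperator (rightMul (.id k A)) (LinearMap.rTensor A f w)
      = adjointAction ((Module.End.rTensorAlgHom k M A).comp π)
        (tensorOperator (rightMul (.id k A)) w) h := by
  simp only [adjointAction_apply_of_comul_eq_sum (ℛ k h).eq.symm] at hf ⊢
  induction w with
  | zero => simp
  | add v w hv hw =>
    simp only [map_add, mul_add, add_mul, Finset.sum_add_distrib, hv, hw]
  | tmul u x =>
    simp only [LinearMap.rTensor_tmul, hf, TensorProduct.sum_tmul, map_sum, tensorOperator_tmul]
    refine Finset.sum_congr rfl fun i _ => TensorProduct.ext' fun m y => rfl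

theorem IsYD.convConst_coactionUnit_mul_convUnit (hM : IsYD k H T id γ act ρ)
    (hT : IsAntipodeInv k H T) :
    let r := convConst k H
      (coactionUnit hM.isCoaction hT.leftInverse hT.rightInverse (rightMul (.id k H))).val
    let p := (convUnit ((Module.End.rTensorAlgHom k M H).comp hM.algHom)).val
    r * p = (tensorRightMulUnit M hT)⁻¹.val * (p * r)
      * toConv ((tensorRightMul k H M).toLinearMap
        ∘ₗ (MulOpposite.opLinearEquiv k).toLinearMap ∘ₗ γ) := by
  intro r p
  ext h m x
  obtain ⟨n, a, b, c, habc⟩ := exists_sum_range_tmul_tmul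
    (LinearMap.rTensor H (comul (R := k)) (comul (R := k) h))
  obtain ⟨l, m₀, m₁, hm⟩ := exists_sum_range_tmul (ρ m)
  have coact_act := hM.2.2.2.2 h m _ _ a b c m₀ m₁ habc hm
  have left : (r * p) h (m ⊗ₜ x) = ∑ i ∈ Finset.range n, ∑ j ∈ Finset.range l,
      act (b i) (m₀ j) ⊗ₜ[k] (x * (γ (c i) * m₁ j * T (a i))) := by
    have : p h (m ⊗ₜ x) = act h m ⊗ₜ x := rfl
    rw [convConst_mul_apply, Module.End.mul_apply, this, coactionUnit_tmul, coact_act]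
    simp [mul_assoc]
  have right (g : H) (y : H) : (p * r) g (m ⊗ₜ y) = ∑ j ∈ Finset.range l,
      act g (m₀ j) ⊗ₜ[k] (y * m₁ j) := by
    rw [mul_convConst_apply, Module.End.mul_apply, coactionUnit_tmul, hm, map_sum, map_sum]
    rfl
  refine left.trans ?_
  rw [convMul_convMul_apply_of_comul_eq_sum habc]
  simp [tensorRightMulUnit_inv_apply, tensorRightMul_apply_tmul, right, mul_assoc,
    -LinearMap.convMul_apply]

theorem EndCoactChar.tensorOperator_adjointAction (hE : EndCoactChar k H T ρ ρE)
    (hM : IsYD k H T id γ act ρ) (hT : IsAntipodeInv k H T) (u : Module.End k M) (h : H) :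
    tensorOperator (rightMul (.id k H)) (ρE (adjointAction hM.algHom u h))
      = ((tensorRightMulUnit M hT)⁻¹.val
        * adjointAction ((Module.End.rTensorAlgHom k M H).comp hM.algHom)
          (tensorOperator (rightMul (.id k H)) (ρE u))
        * (tensorRightMulUnit M hT).val) h := by
  let R := coactionUnit hM.isCoaction hT.leftInverse hT.rightInverse (rightMul (.id k H))
  let r := Units.map (convConst k H).toMonoidHom R
  let p := convUnit ((Module.End.rTensorAlgHom k M H).comp hM.algHom)
  let U := convConst k H (LinearMap.rTensor H u : Module.End k (M ⊗[k] H))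
  have commute_U : Commute (toConv ((tensorRightMul k H M).toLinearMap
      ∘ₗ (MulOpposite.opLinearEquiv k).toLinearMap ∘ₗ γ)) U := by
    ext g m x
    rw [mul_convConst_apply, convConst_mul_apply]
    rfl
  have conj_conj : (r.val * (p * U * p⁻¹.val) * r⁻¹.val)
      = (tensorRightMulUnit M hT)⁻¹.val * (p * (r * U * r⁻¹.val) * p⁻¹.val)
        * (tensorRightMulUnit M hT).val :=
    conj_conj_eq_of_mul_eq (r := r) (p := p) (hM.convConst_coactionUnit_mul_convUnit hT) commute_U
  have conj_U : r * U * r⁻¹.val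
      = convConst k H (tensorOperator (rightMul (.id k H)) (ρE u)) := by
    rw [hE.tensorOperator_eq_conj hM.isCoaction hT, _root_.map_mul, _root_.map_mul]
    rfl
  calc _ = R.val * LinearMap.rTensor H (adjointAction hM.algHom u h) * R⁻¹.val :=
        hE.tensorOperator_eq_conj hM.isCoaction hT _ _
    _ = R.val * (p.val * U * p⁻¹.val) h * R⁻¹.val :=
        congrArg (R.val * · * R⁻¹.val)
          (map_adjointAction (Module.End.rTensorAlgHom k M H) hM.algHom u h)
    _ = (r.val * (p.val * U * p⁻¹.val) * r⁻¹.val) h :=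
        ((mul_convConst_apply _ _ h).trans
          (congrArg (· * R⁻¹.val) (convConst_mul_apply _ _ h))).symm
    _ = _ := by
        rw [conj_conj, conj_U]
        rfl

theorem EndCoactChar.isYDAlgebra (hE : EndCoactChar k H T ρ ρE)
    (hactE : EndActChar k H id act actE)
    (hM : IsYD k H T id γ act ρ) (hT : IsAntipodeInv k H T) : IsYDAlgebra k H T actE ρE := by
  have actE_eq (u h) : actE h u = adjointAction hM.algHom u h := hactE.eq_adjointAction rfl u h
  have hρE := hE.isCoaction hM.isCoaction hT
  refine ⟨⟨fun u => ?_, fun g h u => ?_, hρE.coassoc, hρE.rid_counit, ?_⟩,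
    fun h u v s p q hpq => ?_, fun h => ?_, hE.map_one hM.isCoaction hT,
    fun _ _ _ _ _ _ _ _ => hE.map_mul hM.isCoaction hT⟩
  · rw [actE_eq, adjointAction_apply_one]
  · simp only [actE_eq, adjointAction_apply_mul]
  · intro h u s t a b c u₀ u₁ habc hu
    apply tensorOperator_rightMul_id_injective
    rw [actE_eq, hE.tensorOperator_adjointAction hM hT,
      convMul_convMul_apply_of_comul_eq_sum habc]
    simp only [← tensorOperator_rTensor_adjointAction hM.algHom (actE_eq · _), hu]
    simp only [map_sum, LinearMap.rTensor_tmul, tensorRightMulUnit_apply,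
      tensorRightMulUnit_inv_apply, Finset.mul_sum, Finset.sum_mul, tensorOperator_tmul]
    refine Finset.sum_congr rfl fun i _ => Finset.sum_congr rfl fun j _ =>
      TensorProduct.ext' fun m y => ?_
    simp [mul_assoc, tensorRightMul_apply_tmul]
  · simp only [actE_eq, adjointAction_mul, convMul_apply_of_comul_eq_sum hpq]
  · rw [actE_eq, adjointAction_one, LinearMap.convOne_apply, Algebra.algebraMap_eq_smul_one]

end Compatibility

section Twist

variable {k H M : Type} [Field k] [Ring H] [HopfAlgebra k H] [AddCommGroup M] [Module k M]

/-- A Hopf algebra automorphism as a bialgebra equivalence. -/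
def IsHopfAut.bialgEquiv {α : H ≃ₗ[k] H} (hα : IsHopfAut k H α) : H ≃ₐc[k] H :=
  .ofAlgEquiv (.ofLinearEquiv α hα.2.1 hα.1) (AlgHom.ext hα.2.2.2)
    (AlgHom.ext fun h => (hα.2.2.1 h).symm)

theorem IsHopfAut.apply_antipodeInv_symm_apply {α : H ≃ₗ[k] H} (hα : IsHopfAut k H α)
    {Sinv : H → H} (hS : IsAntipodeInv k H Sinv) (h : H) : α (Sinv (α.symm h)) = Sinv h := by
  apply hS.rightInverse.injective
  calc antipode k (α (Sinv (α.symm h))) = α (antipode k (Sinv (α.symm h))) :=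
        antipode_bialgHom (hα.bialgEquiv : H →ₐc[k] H) _
    _ = antipode k (Sinv h) := by simp only [hS.leftInverse _, α.apply_symm_apply]

theorem IsAntipodeInv.exists_linearMap {Sinv : H → H} (hS : IsAntipodeInv k H Sinv) :
    ∃ T : H →ₗ[k] H, ⇑T = Sinv :=
  ⟨(antipode k).inverse Sinv hS.rightInverse hS.leftInverse, rfl⟩

theorem IsYD.comp_symm {α : H ≃ₗ[k] H} {Sinv β : H → H} {act : H →ₗ[k] M →ₗ[k] M}
    {ρ : M →ₗ[k] M ⊗[k] H} (hM : IsYD k H Sinv α β act ρ) (hα : IsHopfAut k H α)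
    (hS : IsAntipodeInv k H Sinv) :
    IsYD k H Sinv id (β ∘ α.symm) (act ∘ₗ α.symm.toLinearMap) ρ := by
  obtain ⟨act_one, act_mul, coassoc, counit, compat⟩ := hM
  refine ⟨fun m => ?_, fun g h m => ?_, coassoc, counit,
    fun h m s t a b c m₀ m₁ habc hm => ?_⟩
  · exact (congrArg (act · m) (map_one hα.bialgEquiv.symm)).trans (act_one m)
  · exact (congrArg (act · m) (map_mul hα.bialgEquiv.symm g h)).trans (act_mul _ _ m)
  · have comul_comul_symm : LinearMap.rTensor H (comul (R := k)) (comul (R := k) (α.symm h))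
        = ∑ i ∈ s, (α.symm (a i) ⊗ₜ[k] α.symm (b i)) ⊗ₜ[k] α.symm (c i) := by
      refine (rTensor_comul_comul_coalgHom (hα.bialgEquiv.symm : H →ₗc[k] H) h).trans ?_
      rw [habc, map_sum]
      rfl
    simpa [hα.apply_antipodeInv_symm_apply hS] using
      compat _ m s t _ _ _ m₀ m₁ comul_comul_symm hm

end Twist

end GYD

theorem statement_7_general
    (k H : Type) [Field k] [Ring H] [HopfAlgebra k H]
    (Sinv : H → H) (hS : GYD.IsAntipodeInv k H Sinv)
    (α : H ≃ₗ[k] H) (β : H →ₗ[k] H) (hα : GYD.IsHopfAut k H α)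
    (M : Type) [AddCommGroup M] [Module k M]
    (actM : H →ₗ[k] M →ₗ[k] M) (coactM : M →ₗ[k] M ⊗[k] H)
    (hM : GYD.IsYD k H Sinv ⇑α ⇑β actM coactM)
    (actE : H →ₗ[k] Module.End k M →ₗ[k] Module.End k M)
    (coactE : Module.End k M →ₗ[k] Module.End k M ⊗[k] H)
    (hactE : GYD.EndActChar k H ⇑α.symm actM actE)
    (hcoactE : GYD.EndCoactChar k H Sinv coactM coactE) :
    GYD.IsYDAlgebra k H Sinv actE coactE := by
  obtain ⟨T, rfl⟩ := hS.exists_linearMap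
  exact hcoactE.isYDAlgebra (γ := β ∘ₗ α.symm.toLinearMap) (act := actM ∘ₗ α.symm.toLinearMap)
    hactE (hM.comp_symm hα hS) hS

theorem statement_7
    (k H : Type) [Field k] [Ring H] [HopfAlgebra k H]
    (Sinv : H → H) (hS : GYD.IsAntipodeInv k H Sinv)
    (α β : H ≃ₗ[k] H)
    (hα : GYD.IsHopfAut k H α) (hβ : GYD.IsHopfAut k H β)
    (M : Type) [AddCommGroup M] [Module k M] [FiniteDimensional k M]
    (actM : H →ₗ[k] M →ₗ[k] M) (coactM : M →ₗ[k] M ⊗[k] H)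
    (hM : GYD.IsYD k H Sinv ⇑α ⇑β actM coactM)
    (actE : H →ₗ[k] Module.End k M →ₗ[k] Module.End k M)
    (coactE : Module.End k M →ₗ[k] Module.End k M ⊗[k] H)
    (hactE : GYD.EndActChar k H ⇑α.symm actM actE)
    (hcoactE : GYD.EndCoactChar k H Sinv coactM coactE) :
    GYD.IsYDAlgebra k H Sinv actE coactE :=
  statement_7_general k H Sinv hS α β.toLinearMap hα M actM coactM hM actE coactE hactE hcoactE

end
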